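/- arXiv:1411.4387 — 2 statements merged into one kernel-verified Lean document; each statement's English description precedes it below -/
import Mathlib

section
/- Let α be real with 0 < α < 1 and set β = (1 + √α)/2. Then there do not exist nonnegative real numbers z₁, z₂, z₃, z₄, Z₁, Z₂, Z₃, Z₄ satisfying: z₁+z₂ = β, z₁+z₃ = β, Z₃+Z₄ = β, Z₂+Z₄ = β, z₃+z₄ = 1−β, z₂+z₄ = 1−β, Z₁+Z₂ = 1−β, Z₁+Z₃ = 1−β, and z_j + Z_j = 2ν_j for j = 1,…,4 where ν₁ = ν₄ = α/2 and ν₂ = ν₃ = (1−α)/2. -/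
/-!
Under the state `z`, the regions `S_x = S₁ ∪ S₂` and `S_y = S₁ ∪ S₃` both have probability `β`, so
by Bonferroni's inequality their intersection `S₁` has probability `z₁ ≥ 2 * β - 1 = √α`. But `z`
makes up half of the ensemble `ν`, which forces `z₁ ≤ 2 * ν₁ = α`, and `α < √α` for `0 < α < 1`.
-/

/-- Bonferroni's inequality `P A + P B - 1 ≤ P (A ∩ B)`, written as `P A - P Bᶜ ≤ P (A ∩ B)`: take
`a = P (A ∩ B)`, `b = P (A \ B)` and `c = P (A ∪ B)ᶜ`. -/
theorem add_sub_add_le_of_nonneg {G : Type*} [AddCommGroup G] [PartialOrder G]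
    [IsOrderedAddMonoid G] (a b : G) {c : G} (hc : 0 ≤ c) : (a + b) - (b + c) ≤ a :=
  calc
    (a + b) - (b + c) = a - c := by abel
    _ ≤ a := sub_le_self a hc

theorem steering_three_ensembles_no_lhv_general {α β : ℝ} (hα0 : 0 < α) (hα1 : α < 1)
    (hβ : β = (1 + √α) / 2) :
    ¬ ∃ z₁ z₂ z₄ Z₁ : ℝ, 0 ≤ z₄ ∧ 0 ≤ Z₁ ∧
      z₁ + z₂ = β ∧ z₂ + z₄ = 1 - β ∧ z₁ + Z₁ = 2 * (α / 2) := by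
  rintro ⟨z₁, z₂, z₄, Z₁, hz₄, hZ₁, hx, hY, hν⟩
  have sqrt_le : √α ≤ α :=
    calc
      √α = β - (1 - β) := by rw [hβ]; ring
      _ = (z₁ + z₂) - (z₂ + z₄) := by rw [hx, hY]
      _ ≤ z₁ := add_sub_add_le_of_nonneg z₁ z₂ hz₄
      _ ≤ z₁ + Z₁ := le_add_of_nonneg_right hZ₁
      _ = α := by rw [hν]; ring
  exact sqrt_le.not_gt (Real.lt_sqrt_self_iff.mpr ⟨hα0.ne', hα1⟩)

/-- Three-ensemble steering contradiction: for `0 < α < 1` and `β = (1+√α)/2`,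
the full system of Born-rule and ensemble-decomposition consistency conditions
has no nonnegative solution. -/
theorem steering_three_ensembles_no_lhv (α : ℝ) (hα0 : 0 < α) (hα1 : α < 1)
    (β : ℝ) (hβ : β = (1 + Real.sqrt α) / 2) :
    ¬ ∃ z₁ z₂ z₃ z₄ Z₁ Z₂ Z₃ Z₄ : ℝ,
      0 ≤ z₁ ∧ 0 ≤ z₂ ∧ 0 ≤ z₃ ∧ 0 ≤ z₄ ∧
      0 ≤ Z₁ ∧ 0 ≤ Z₂ ∧ 0 ≤ Z₃ ∧ 0 ≤ Z₄ ∧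
      z₁ + z₂ = β ∧ z₁ + z₃ = β ∧ Z₃ + Z₄ = β ∧ Z₂ + Z₄ = β ∧
      z₃ + z₄ = 1 - β ∧ z₂ + z₄ = 1 - β ∧ Z₁ + Z₂ = 1 - β ∧ Z₁ + Z₃ = 1 - β ∧
      z₁ + Z₁ = 2 * (α / 2) ∧ z₂ + Z₂ = 2 * ((1 - α) / 2) ∧
      z₃ + Z₃ = 2 * ((1 - α) / 2) ∧ z₄ + Z₄ = 2 * (α / 2) := by
  rintro ⟨z₁, z₂, _, z₄, Z₁, _, _, _, -, -, -, hz₄, hZ₁, -, -, -,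
    hx, -, -, -, -, hY, -, -, hν, -⟩
  exact steering_three_ensembles_no_lhv_general hα0 hα1 hβ
    ⟨z₁, z₂, z₄, Z₁, hz₄, hZ₁, hx, hY, hν⟩
end

section
/- Let n, m be positive natural numbers and let v, w : Fin m → (Fin n → ℂ) be two families of vectors in ℂⁿ. Then Σᵢ (w i)(w i)* = Σᵢ (v i)(v i)* (equality of the n×n matrices whose (k,l) entries are Σᵢ (w i k)·conj(w i l) and Σᵢ (v i k)·conj(v i l)) if and only if there exists a unitary m×m complex matrix U such that w i = Σⱼ U i j • v j for every i. -/
open scoped Matrix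

/-!
Let `V`, `W` be the matrices with rows `v i`, `w i`. The two density matrices are the transposes of
`Vᴴ * V` and `Wᴴ * W`, i.e. of the Gram matrices of the *columns* of `V` and `W`. Families with
equal Gram matrices have linear combinations of equal norms, so sending each column of `V` to the
corresponding column of `W` gives a well-defined isometry on the column space of `V`. By
finite-dimensionality it extends to the whole space, and its matrix is the required unitary.
-/

section Isometry

theorem exists_linearIsometry_range_of_norm_eq {R E F G : Type*} [Ring R] [AddCommGroup E]
    [Module R E] [SeminormedAddCommGroup F] [Module R F] [NormedAddCommGroup G] [Module R G]
    (A : E →ₗ[R] F) (B : E →ₗ[R] G) (h : ∀ x, ‖A x‖ = ‖B x‖) :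
    ∃ L : A.range →ₗᵢ[R] G, ∀ x, L (A.rangeRestrict x) = B x := by
  have ker_le : A.ker ≤ B.ker := fun x hx ↦ by
    rw [LinearMap.mem_ker] at hx ⊢
    rw [← norm_eq_zero, ← h, hx, norm_zero]
  let f : A.range →ₗ[R] G := A.ker.liftQ B ker_le ∘ₗ A.quotKerEquivRange.symm.toLinearMap
  have f_apply (x : E) : f (A.rangeRestrict x) = B x :=
    congrArg (A.ker.liftQ B ker_le) (A.quotKerEquivRange_symm_apply_image x ⟨x, rfl⟩)
  have norm_f (y : A.range) : ‖f y‖ = ‖y‖ := by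
    obtain ⟨x, rfl⟩ := A.surjective_rangeRestrict y
    rw [f_apply, ← h]
    rfl
  exact ⟨⟨f, norm_f⟩, f_apply⟩

variable {𝕜 κ F G : Type*} [RCLike 𝕜]

theorem norm_linearCombination_eq_of_gram_eq [SeminormedAddCommGroup F] [InnerProductSpace 𝕜 F]
    [SeminormedAddCommGroup G] [InnerProductSpace 𝕜 G] {x : κ → F} {y : κ → G}
    (h : Matrix.gram 𝕜 x = Matrix.gram 𝕜 y) (c : κ →₀ 𝕜) :
    ‖Finsupp.linearCombination 𝕜 x c‖ = ‖Finsupp.linearCombination 𝕜 y c‖ := by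
  have inner_eq (k l : κ) : inner 𝕜 (x k) (x l) = inner 𝕜 (y k) (y l) := congrFun₂ h k l
  simp only [@norm_eq_sqrt_re_inner 𝕜, Finsupp.linearCombination_apply, Finsupp.sum,
    sum_inner, inner_sum, inner_smul_left, inner_smul_right, inner_eq]

theorem exists_linearIsometryEquiv_of_gram_eq [NormedAddCommGroup F] [InnerProductSpace 𝕜 F]
    [FiniteDimensional 𝕜 F] {x y : κ → F} (h : Matrix.gram 𝕜 x = Matrix.gram 𝕜 y) :
    ∃ e : F ≃ₗᵢ[𝕜] F, ∀ k, e (x k) = y k := by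
  obtain ⟨L, hL⟩ := exists_linearIsometry_range_of_norm_eq _ _
    (norm_linearCombination_eq_of_gram_eq h)
  refine ⟨L.extend.toLinearIsometryEquiv rfl, fun k ↦ ?_⟩
  simpa [← L.extend_apply] using hL (Finsupp.single k 1)

end Isometry

section Matrix

open Matrix WithLp

theorem sum_vecMulVec_star {ι κ R : Type*} [Fintype ι] [NonUnitalCommSemiring R]
    [StarRing R] (v : ι → κ → R) :
    ∑ i, vecMulVec (v i) (star (v i)) = ((of v)ᴴ * of v)ᵀ := by
  ext k l
  simp [Matrix.sum_apply, vecMulVec_apply, mul_apply, mul_comm]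

theorem of_eq_mul_of_iff {ι ι' κ R : Type*} [Fintype ι] [NonUnitalNonAssocSemiring R]
    (U : Matrix ι' ι R) (v : ι → κ → R) (w : ι' → κ → R) :
    of w = U * of v ↔ ∀ i, w i = ∑ j, U i j • v j := by
  simp [← Matrix.ext_iff, funext_iff, mul_apply]

variable {𝕜 ι κ : Type*} [RCLike 𝕜] [Fintype ι]

theorem gram_toLp_col (V : Matrix ι κ 𝕜) : gram 𝕜 (fun k ↦ toLp 2 (V.col k)) = Vᴴ * V := by
  ext k l
  simp [EuclideanSpace.inner_toLp_toLp, mul_apply, dotProduct, mul_comm]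

variable [DecidableEq ι]

theorem exists_mem_unitaryGroup_mulVec_eq
    (e : EuclideanSpace 𝕜 ι ≃ₗᵢ[𝕜] EuclideanSpace 𝕜 ι) :
    ∃ U ∈ unitaryGroup ι 𝕜, ∀ x, toLp 2 (U *ᵥ x) = e (toLp 2 x) := by
  let toMatrix := (toEuclideanCLM (n := ι) (𝕜 := 𝕜)).symm
  refine ⟨toMatrix (Unitary.linearIsometryEquiv.symm e),
    Unitary.map_mem toMatrix (Unitary.linearIsometryEquiv.symm e).2, fun x ↦ ?_⟩
  rw [← toEuclideanCLM_toLp, StarAlgEquiv.apply_symm_apply]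
  rfl

theorem conjTranspose_mul_self_eq_iff_exists_unitary {V W : Matrix ι κ 𝕜} :
    Wᴴ * W = Vᴴ * V ↔ ∃ U ∈ unitaryGroup ι 𝕜, W = U * V := by
  constructor
  · intro h
    rw [← gram_toLp_col, ← gram_toLp_col] at h
    obtain ⟨e, he⟩ := exists_linearIsometryEquiv_of_gram_eq h.symm
    obtain ⟨U, hU, hUe⟩ := exists_mem_unitaryGroup_mulVec_eq e
    have mulVec_col (k : κ) : U *ᵥ V.col k = W.col k :=
      toLp_injective 2 ((hUe _).trans (he k))
    exact ⟨U, hU, Matrix.ext fun i k ↦ (congrFun (mulVec_col k) i).symm⟩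
  · rintro ⟨U, hU, rfl⟩
    calc (U * V)ᴴ * (U * V) = Vᴴ * (Uᴴ * U) * V := by
          simp only [conjTranspose_mul, Matrix.mul_assoc]
      _ = Vᴴ * V := by rw [← star_eq_conjTranspose U, mem_unitaryGroup_iff'.1 hU, Matrix.mul_one]

theorem steering_theorem_unitary_mixing_general (v w : ι → κ → 𝕜) :
    ∑ i, vecMulVec (w i) (star (w i)) = ∑ i, vecMulVec (v i) (star (v i)) ↔
      ∃ U ∈ unitaryGroup ι 𝕜, ∀ i, w i = ∑ j, U i j • v j := by
  simp only [sum_vecMulVec_star, transpose_inj, conjTranspose_mul_self_eq_iff_exists_unitary,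
    of_eq_mul_of_iff]

end Matrix

/-- Core of Schrödinger's steering (HJW) theorem: two families of
subnormalized vectors `v, w : Fin m → ℂⁿ` average to the same (unnormalized)
density matrix `∑ i, (w i)(w i)* = ∑ i, (v i)(v i)*` if and only if they are
related by an `m × m` unitary matrix, `w i = ∑ j, U i j • v j`. -/
theorem steering_theorem_unitary_mixing (n m : ℕ) (hn : 0 < n) (hm : 0 < m)
    (v w : Fin m → (Fin n → ℂ)) :
    (∑ i, Matrix.vecMulVec (w i) (star (w i)) =
      ∑ i, Matrix.vecMulVec (v i) (star (v i))) ↔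
    ∃ U : Matrix (Fin m) (Fin m) ℂ, U ∈ Matrix.unitaryGroup (Fin m) ℂ ∧
      ∀ i, w i = ∑ j, U i j • v j :=
  steering_theorem_unitary_mixing_general v w
end
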